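/- Let N ∈ ℤ_{≥0} and let P : 𝒪_F → E be given by P(z) = Σ_{i∈I_{≤N}} a_i·z^i/i! with a_i ∈ E. Then there exist a constant C ∈ ℝ_{≥1} and n₀ ∈ ℤ_{≥0} such that for every h ≥ n₀ and every m ∈ I_{=N} one has |a_m|·q^{−hN} ≤ C · sup_{z∈ϖ_F^h𝒪_F} |P(z)|. -/

import Mathlib

/-!
Setting (cf. the paper's notations): `O` plays the role of the ring of integers `𝒪_F` of a
finite extension `F` of `ℚ_p`, `E` is the coefficient field (a finite extension of `ℚ_p`
with its p-adic absolute value, normalized by `|x| = p^{-val_F(x)}`, `val_F(p) = [F:ℚ_p]`),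
`S` is the (finite) set of `ℚ_p`-algebra embeddings `F ↪ E`, restricted here to `O`,
`ν : O → ℝ` is the absolute value on `O` (the common restriction of the norm of `E` along any
embedding), `ϖ` is a fixed uniformizer with `ν ϖ = q⁻¹` where `q = p^f` is the cardinality
of the residue field, and `u * ϖ ^ e = p` records the ramification index `e`.
-/

open scoped Classical

noncomputable section

namespace CrPaper

structure Setting (S O E : Type*) [Fintype S] [CommRing O] [NormedField E] where
  q : ℝ
  p : ℕ
  fdeg : ℕ
  hp : p.Prime
  hfdeg : 0 < fdeg
  hq : q = (p : ℝ) ^ fdeg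
  emb : S → O →+* E
  emb_inj : ∀ s, Function.Injective (emb s)
  emb_distinct : Function.Injective emb
  ν : O → ℝ
  norm_emb : ∀ (s) (z : O), ‖emb s z‖ = ν z
  norm_le_one : ∀ (s) (z : O), ‖emb s z‖ ≤ 1
  norm_add_max : ∀ x y : E, ‖x + y‖ ≤ max ‖x‖ ‖y‖
  ϖ : O
  ν_ϖ : ν ϖ = q⁻¹
  mem_ball_iff : ∀ (y : O) (n : ℕ), (∃ z, y = ϖ ^ n * z) ↔ ν y ≤ q⁻¹ ^ n
  ram : ∃ (e : ℕ) (u : O), 0 < e ∧ IsUnit u ∧ u * ϖ ^ e = (p : O)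

variable {S O E : Type*} [Fintype S] [DecidableEq S] [CommRing O] [IsDomain O]
  [NormedField E] [CompleteSpace E] [CharZero E]

/-- The total weight `|i| = ∑ i_σ` of a multi-index. -/
def wt (i : S → ℕ) : ℕ := ∑ s, i s

/-- `i! = ∏ i_σ!` for a multi-index. -/
def mfact (i : S → ℕ) : ℕ := ∏ s, (i s).factorial

/-- The (finite) set `I_{≤N}` of multi-indices of total weight `≤ N`. -/
def Idx (S : Type*) [Fintype S] [DecidableEq S] (N : ℕ) : Finset (S → ℕ) :=
  (Fintype.piFinset fun _ : S => Finset.range (N + 1)).filter fun i => wt i ≤ N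

/-- `z^i = ∏_σ σ(z)^{i_σ}`. -/
def mpow (St : Setting S O E) (z : O) (i : S → ℕ) : E := ∏ s, St.emb s z ^ i s

/-- The Taylor remainder `ε_{f,N}(x,y) = f(x+y) − ∑_{|i|≤N} D_i f(x) y^i / i!`. -/
def epsTay (St : Setting S O E) (N : ℕ) (f : O → E) (D : (S → ℕ) → O → E) (x y : O) : E :=
  f (x + y) - ∑ i ∈ Idx S N, D i x * mpow St y i / (mfact i : E)

/-- `f` is of class `C^r` with the family of bounded functions `D` witnessing the
definition: all `D_i` (`|i| ≤ ⌊r⌋`) are bounded and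
`C_{f,r}(h) = sup_{x ∈ O, y ∈ ϖ^h O} |ε_{f,⌊r⌋}(x,y)| q^{rh} → 0` as `h → ∞`. -/
def IsCrWith (St : Setting S O E) (r : ℝ) (f : O → E) (D : (S → ℕ) → O → E) : Prop :=
  (∀ i ∈ Idx S ⌊r⌋₊, ∃ C : ℝ, ∀ x : O, ‖D i x‖ ≤ C) ∧
  ∀ ε : ℝ, 0 < ε → ∃ M : ℕ, ∀ h : ℕ, M ≤ h → ∀ x z : O,
    ‖epsTay St ⌊r⌋₊ f D x (St.ϖ ^ h * z)‖ * St.q ^ (r * (h : ℝ)) ≤ ε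

/-- `f` is of class `C^r`. -/
def IsCr (St : Setting S O E) (r : ℝ) (f : O → E) : Prop :=
  ∃ D, IsCrWith St r f D

/-- The `C^r`-norm of `f` (relative to the — unique — family `D`):
`max( sup_{i,x} |D_i f(x)/i!| , sup_{x,y} |ε_{f,⌊r⌋}(x,y)|/|y|^r )`. -/
def CrNorm (St : Setting S O E) (r : ℝ) (f : O → E) (D : (S → ℕ) → O → E) : ℝ :=
  max (⨆ i : (Idx S ⌊r⌋₊), ⨆ x : O, ‖D i.1 x / (mfact i.1 : E)‖)
      (⨆ x : O, ⨆ y : O, ‖epsTay St ⌊r⌋₊ f D x y‖ / St.ν y ^ r)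

/-!
The functions `z ↦ z^i` are multiplicative characters of the ring, and distinct multi-indices give
distinct characters: for fixed `x`, `(n + x)^i = ∏ (n + σ(x))^{i_σ}` is a monic polynomial in the
natural number `n` with next-to-leading coefficient `∑ i_σ σ(x)`, and this function of `x`
determines `i` because the `σ` are themselves distinct characters. By Dedekind the `z^i` are
therefore linearly independent, so finitely many evaluations recover the coefficients of a
combination of them, with a loss bounded by a constant. Applied to
`P(ϖ^h z) = ∑ (a_i ϖ^{hi} / i!) z^i`, this bounds `|a_m ϖ^{hm} / m!|`, hence also
`|a_m| q^{-h|m|}` since `|m!| ≤ 1`.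
-/

section CoefficientBounds

variable {ι X K : Type*}

lemma exists_finsupp_sum_mul_eq_ite [Field K] {f : ι → X → K} (hf : LinearIndependent K f)
    {s : Finset ι} {i : ι} (hi : i ∈ s) :
    ∃ w : X →₀ K, ∀ j ∈ s, (w.sum fun x c => c * f j x) = if j = i then 1 else 0 := by
  have hspan : Submodule.span K (Set.range (flip fun j : s => f j)) = ⊤ :=
    span_flip_eq_top_iff_linearIndependent.2 (hf.comp _ Subtype.val_injective)
  obtain ⟨w, hw⟩ := Finsupp.mem_span_range_iff_exists_finsupp.1
    (hspan ▸ Submodule.mem_top : Pi.single ⟨i, hi⟩ 1 ∈ _)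
  refine ⟨w, fun j hj => ?_⟩
  simpa [Finsupp.sum, flip, Pi.single_apply] using congrFun hw ⟨j, hj⟩

lemma finsupp_sum_mul_sum_eq_coeff [CommSemiring K] {f : ι → X → K} {s : Finset ι} {i : ι}
    (hi : i ∈ s) {w : X →₀ K} (hw : ∀ j ∈ s, (w.sum fun x c => c * f j x) = if j = i then 1 else 0)
    (a : ι → K) : (w.sum fun x c => c * ∑ j ∈ s, a j * f j x) = a i := by
  calc (w.sum fun x c => c * ∑ j ∈ s, a j * f j x)
      = ∑ j ∈ s, a j * w.sum fun x c => c * f j x := by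
        simp only [Finsupp.sum, Finset.mul_sum]
        rw [Finset.sum_comm]
        simp only [mul_left_comm]
    _ = ∑ j ∈ s, a j * if j = i then 1 else 0 :=
        Finset.sum_congr rfl fun j hj => by rw [hw j hj]
    _ = a i := by simp [hi]

lemma norm_finsupp_sum_mul_le [SeminormedRing K] (w : X →₀ K) {g : X → K}
    (hg : BddAbove (Set.range fun x => ‖g x‖)) :
    ‖w.sum fun x c => c * g x‖ ≤ (w.sum fun _ c => ‖c‖) * ⨆ x, ‖g x‖ := by
  rw [Finsupp.sum, Finsupp.sum, Finset.sum_mul]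
  refine norm_sum_le_of_le _ fun x _ => (norm_mul_le _ _).trans ?_
  exact mul_le_mul_of_nonneg_left (le_ciSup hg x) (norm_nonneg _)

lemma exists_norm_coeff_le_mul_iSup [NormedField K] {f : ι → X → K} (hf : LinearIndependent K f)
    (s : Finset ι) :
    ∃ C : ℝ, 1 ≤ C ∧ ∀ a : ι → K, BddAbove (Set.range fun x => ‖∑ j ∈ s, a j * f j x‖) →
      ∀ i ∈ s, ‖a i‖ ≤ C * ⨆ x, ‖∑ j ∈ s, a j * f j x‖ := by
  choose! w hw using fun i (hi : i ∈ s) => exists_finsupp_sum_mul_eq_ite hf hi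
  obtain ⟨M, hM⟩ := (s.image fun i => (w i).sum fun _ c => ‖c‖).exists_le
  refine ⟨max 1 M, le_max_left _ _, fun a ha i hi => ?_⟩
  calc ‖a i‖ = ‖(w i).sum fun x c => c * ∑ j ∈ s, a j * f j x‖ := by
        rw [finsupp_sum_mul_sum_eq_coeff hi (hw i hi)]
    _ ≤ ((w i).sum fun _ c => ‖c‖) * ⨆ x, ‖∑ j ∈ s, a j * f j x‖ := norm_finsupp_sum_mul_le _ ha
    _ ≤ max 1 M * ⨆ x, ‖∑ j ∈ s, a j * f j x‖ :=
        mul_le_mul_of_nonneg_right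
          ((hM _ (Finset.mem_image_of_mem _ hi)).trans (le_max_right _ _))
          (Real.iSup_nonneg fun _ => norm_nonneg _)

lemma bddAbove_range_norm_sum_mul [SeminormedRing K] {f : ι → X → K}
    (hf : ∀ j x, ‖f j x‖ ≤ 1) (s : Finset ι) (a : ι → K) :
    BddAbove (Set.range fun x => ‖∑ j ∈ s, a j * f j x‖) := by
  refine ⟨∑ j ∈ s, ‖a j‖, Set.forall_mem_range.2 fun x => norm_sum_le_of_le _ fun j _ => ?_⟩
  exact (norm_mul_le _ _).trans (mul_le_of_le_one_right (norm_nonneg _) (hf j x))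

end CoefficientBounds

section MonomialCharacters

open Polynomial

variable {ι R K : Type*}

lemma linearIndependent_ringHom [Semiring R] [CommRing K] [IsDomain K] {φ : ι → R →+* K}
    (hφ : Function.Injective φ) :
    LinearIndependent K fun s => (φ s : R → K) :=
  (linearIndependent_monoidHom R K).comp (fun s => (φ s : R →* K))
    (RingHom.coe_monoidHom_injective.comp hφ)

variable [Fintype ι]

lemma nextCoeff_prod_X_add_C_pow [CommSemiring K] (c : ι → K) (i : ι → ℕ) :
    (∏ s, (X + C (c s)) ^ i s).nextCoeff = ∑ s, i s * c s := by
  rw [Monic.nextCoeff_prod _ _ fun s _ => (monic_X_add_C (c s)).pow (i s)]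
  simp only [(monic_X_add_C _).nextCoeff_pow, nextCoeff_X_add_C, nsmul_eq_mul]

variable [Semiring R]

/-- The character `z ↦ z^i = ∏ s, φ_s(z)^{i_s}` attached to a family `φ` of ring homomorphisms.
It is a monoid homomorphism so that Dedekind's independence of characters applies to it. -/
def monomialHom [CommSemiring K] (φ : ι → R →+* K) (i : ι → ℕ) : R →* K :=
  ∏ s, (φ s : R →* K) ^ i s

lemma monomialHom_apply [CommSemiring K] (φ : ι → R →+* K) (i : ι → ℕ) (z : R) :
    monomialHom φ i z = ∏ s, φ s z ^ i s := by
  simp [monomialHom]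

variable [CommRing K] [IsDomain K] [CharZero K] {φ : ι → R →+* K}

lemma sum_natCast_mul_eq_of_monomialHom_eq {i j : ι → ℕ}
    (hij : monomialHom φ i = monomialHom φ j) (x : R) :
    ∑ s, i s * φ s x = ∑ s, j s * φ s x := by
  have hpoly : ∏ s, (X + C (φ s x)) ^ i s = ∏ s, (X + C (φ s x)) ^ j s := by
    refine eq_of_infinite_eval_eq _ _
      ((Set.infinite_range_of_injective (Nat.cast_injective (R := K))).mono ?_)
    rintro _ ⟨n, rfl⟩
    simpa [monomialHom_apply, eval_prod] using DFunLike.congr_fun hij (n + x)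
  simpa only [nextCoeff_prod_X_add_C_pow] using congrArg nextCoeff hpoly

lemma monomialHom_injective (hφ : Function.Injective φ) :
    Function.Injective (monomialHom φ) := by
  intro i j hij
  have hindep := Fintype.linearIndependent_iff.1 (linearIndependent_ringHom (R := R) (K := K) hφ)
  have hcoeff := hindep (fun s => (i s : K) - j s) <| funext fun x => by
    simp [sub_mul, sum_natCast_mul_eq_of_monomialHom_eq hij x]
  exact funext fun s => by exact_mod_cast sub_eq_zero.1 (hcoeff s)

lemma linearIndependent_monomialHom (hφ : Function.Injective φ) :
    LinearIndependent K fun i => (monomialHom φ i : R → K) :=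
  (linearIndependent_monoidHom R K).comp _ (monomialHom_injective hφ)

end MonomialCharacters

section Monomials

omit [DecidableEq S] [IsDomain O] [CompleteSpace E]

lemma mem_Idx [DecidableEq S] {N : ℕ} {i : S → ℕ} : i ∈ Idx S N ↔ wt i ≤ N := by
  refine ⟨fun hi => (Finset.mem_filter.1 hi).2, fun hi => Finset.mem_filter.2 ⟨?_, hi⟩⟩
  have hle (s : S) : i s ≤ wt i := Finset.single_le_sum_of_canonicallyOrdered (Finset.mem_univ s)
  exact Fintype.mem_piFinset.2 fun s =>
    Finset.mem_range.2 (Nat.lt_succ_of_le ((hle s).trans hi))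

lemma norm_mfact_pos (i : S → ℕ) : 0 < ‖(mfact i : E)‖ :=
  norm_pos_iff.2 <| Nat.cast_ne_zero.2 <| Finset.prod_ne_zero_iff.2 fun _ _ =>
    Nat.factorial_ne_zero _

omit [CharZero E]

lemma mpow_eq_monomialHom (St : Setting S O E) (z : O) (i : S → ℕ) :
    mpow St z i = monomialHom St.emb i z :=
  (monomialHom_apply _ _ _).symm

lemma mpow_mul (St : Setting S O E) (x y : O) (i : S → ℕ) :
    mpow St (x * y) i = mpow St x i * mpow St y i := by
  simp only [mpow_eq_monomialHom, map_mul]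

lemma mpow_pow (St : Setting S O E) (z : O) (h : ℕ) (i : S → ℕ) :
    mpow St (z ^ h) i = mpow St z i ^ h := by
  simp only [mpow_eq_monomialHom, map_pow]

lemma norm_mpow (St : Setting S O E) (z : O) (i : S → ℕ) : ‖mpow St z i‖ = St.ν z ^ wt i := by
  simp only [mpow, norm_prod, norm_pow, St.norm_emb, Finset.prod_pow_eq_pow_sum, wt]

lemma norm_mpow_le_one (St : Setting S O E) (i : S → ℕ) (z : O) : ‖mpow St z i‖ ≤ 1 := by
  simp only [mpow, norm_prod, norm_pow]
  exact Finset.prod_le_one (fun _ _ => by positivity) fun s _ =>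
    pow_le_one₀ (norm_nonneg _) (St.norm_le_one s z)

lemma q_nonneg (St : Setting S O E) : 0 ≤ St.q :=
  St.hq ▸ pow_nonneg (Nat.cast_nonneg _) _

lemma norm_mpow_uniformizer_pow (St : Setting S O E) (h : ℕ) (i : S → ℕ) :
    ‖mpow St (St.ϖ ^ h) i‖ = St.q ^ (-((h : ℝ) * (wt i : ℝ))) := by
  rw [mpow_pow, norm_pow, norm_mpow, St.ν_ϖ, ← pow_mul', inv_pow, Real.rpow_neg (q_nonneg St),
    ← Nat.cast_mul, Real.rpow_natCast]

lemma norm_natCast_le_one (St : Setting S O E) (n : ℕ) : ‖(n : E)‖ ≤ 1 :=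
  haveI := IsUltrametricDist.isUltrametricDist_of_forall_norm_add_le_max_norm St.norm_add_max
  IsUltrametricDist.norm_natCast_le_one E n

end Monomials

omit [IsDomain O] [CompleteSpace E] in
theorem statement3_general (St : Setting S O E) (N : ℕ) :
    ∃ C : ℝ, 1 ≤ C ∧ ∀ (a : (S → ℕ) → E) (h : ℕ) (m : S → ℕ), wt m ≤ N →
      ‖a m‖ * St.q ^ (-((h : ℝ) * (wt m : ℝ))) ≤
        C * ⨆ z : O, ‖∑ j ∈ Idx S N, a j * mpow St (St.ϖ ^ h * z) j / (mfact j : E)‖ := by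
  have hindep : LinearIndependent E fun i z => mpow St z i := by
    simpa only [mpow_eq_monomialHom] using linearIndependent_monomialHom St.emb_distinct
  obtain ⟨C, hC, hbound⟩ := exists_norm_coeff_le_mul_iSup hindep (Idx S N)
  refine ⟨C, hC, fun a h m hm => ?_⟩
  let b (j : S → ℕ) : E := a j * mpow St (St.ϖ ^ h) j / (mfact j : E)
  have hP (z : O) : ∑ j ∈ Idx S N, a j * mpow St (St.ϖ ^ h * z) j / (mfact j : E) =
      ∑ j ∈ Idx S N, b j * mpow St z j :=
    Finset.sum_congr rfl fun j _ => by simp only [b, mpow_mul]; ring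
  calc ‖a m‖ * St.q ^ (-((h : ℝ) * (wt m : ℝ)))
      = ‖a m * mpow St (St.ϖ ^ h) m‖ := by rw [norm_mul, norm_mpow_uniformizer_pow]
    _ ≤ ‖b m‖ := by
      rw [norm_div]
      exact le_div_self (norm_nonneg _) (norm_mfact_pos m) (norm_natCast_le_one St _)
    _ ≤ C * ⨆ z : O, ‖∑ j ∈ Idx S N, a j * mpow St (St.ϖ ^ h * z) j / (mfact j : E)‖ := by
      simp only [hP]
      exact hbound b (bddAbove_range_norm_sum_mul (norm_mpow_le_one St) _ b) m (mem_Idx.2 hm)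

/-- for `P(z) = ∑_{i ∈ I_{≤N}} a_i z^i/i!`, there are `C ≥ 1` and `n₀` such that
for all `h ≥ n₀` and every `m ∈ I_{=N}`, `|a_m| q^{−hN} ≤ C · sup_{z ∈ ϖ^h O} |P(z)|`. -/
theorem statement3 (St : Setting S O E) (N : ℕ) (a : (S → ℕ) → E) :
    ∃ (C : ℝ) (n₀ : ℕ), 1 ≤ C ∧
      ∀ h : ℕ, n₀ ≤ h → ∀ m : S → ℕ, wt m = N →
        ‖a m‖ * St.q ^ (-((h : ℝ) * (N : ℝ))) ≤
          C * ⨆ z : O, ‖∑ j ∈ Idx S N, a j * mpow St (St.ϖ ^ h * z) j / (mfact j : E)‖ := by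
  obtain ⟨C, hC, hbound⟩ := statement3_general St N
  exact ⟨C, 0, hC, fun h _ m hm => by simpa only [hm] using hbound a h m hm.le⟩

end CrPaper
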